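/- Let p, m be natural numbers and let A ∈ ℂ^{p×p}, B, C ∈ ℂ^{p×m}, D ∈ ℂ^{m×m} be constant matrices such that det(z·A + A^H) ≠ 0 in ℂ(z). Define H := (z·D + D^H) + (z·B^H + C^H)·(z·A + A^H)⁻¹·(z·C + B) ∈ ℂ(z)^{m×m} (the transfer function of the *-palindromic linear system matrix L(z) = z·[[−A, C],[B^H, D]] + [[−A^H, B],[C^H, D^H]]). Then z·H^*(z⁻¹) = H, i.e. for all i, j, multiplying by z the substitution of z⁻¹ into conj(H_{ji}) yields H_{ij}. -/

import Mathlib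

/-!
Para-conjugation `f ↦ f^*(1/z)` is an involutive ring endomorphism of `ℂ(z)`, so it makes `ℂ(z)` a
commutative star ring extending `ℂ`, in which `z` is unitary and `Rᴴ` is `R^*(1/z)`. In any
commutative star ring with a unitary `z`, the map `R ↦ z • Rᴴ` sends `z • P + Qᴴ` to `z • Q + Pᴴ`.
Hence it fixes `M = z • A + Aᴴ` and `z • D + Dᴴ` and exchanges `z • Bᴴ + Cᴴ` with `z • C + B`, while
`M⁻¹ᴴ = z • M⁻¹`; the scalars in the product then cancel.
-/

open Polynomial Matrix

set_option synthInstance.maxHeartbeats 1000000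
set_option maxHeartbeats 1000000

noncomputable section

/-- Coefficientwise complex conjugation on rational functions. -/
def conjRF : RatFunc ℂ →+* RatFunc ℂ :=
  RatFunc.mapRingHom (Polynomial.mapRingHom (starRingEnd ℂ))
    (by
      intro x hx
      simp only [Submonoid.mem_comap, mem_nonZeroDivisors_iff_ne_zero] at *
      intro h
      exact hx (Polynomial.map_injective _ (starRingEnd ℂ).injective (by simpa using h)))

/-- Substitution of `g` for the variable in `f`. -/
def subst (g f : RatFunc ℂ) : RatFunc ℂ := RatFunc.eval (algebraMap ℂ (RatFunc ℂ)) g f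

/-- Constant complex matrices regarded as matrices over `ℂ(z)`. -/
def toRF {n o : Type*} (A : Matrix n o ℂ) : Matrix n o (RatFunc ℂ) :=
  A.map (algebraMap ℂ (RatFunc ℂ))

/-- The para-conjugate `R^*(1/z)`. -/
def paraConj {n : Type*} (R : Matrix n n (RatFunc ℂ)) : Matrix n n (RatFunc ℂ) :=
  fun i j => subst (RatFunc.X)⁻¹ (conjRF (R j i))

def IsParaHermitian {n : Type*} (R : Matrix n n (RatFunc ℂ)) : Prop := paraConj R = R

def IsParaSkewHermitian {n : Type*} (R : Matrix n n (RatFunc ℂ)) : Prop := paraConj R = -R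

/-- The variable `z` of `ℂ(z)`. -/
def zz : RatFunc ℂ := RatFunc.X

theorem ratFunc_ringHom_ext {K L : Type*} [Field K] [Semiring L] {φ ψ : RatFunc K →+* L}
    (hC : ∀ c, φ (RatFunc.C c) = ψ (RatFunc.C c)) (hX : φ RatFunc.X = ψ RatFunc.X) : φ = ψ :=
  IsLocalization.ringHom_ext (nonZeroDivisors K[X]) (Polynomial.ringHom_ext hC hX)

theorem ratFunc_mapRingHom_algebraMap {K R : Type*} [Field K] [CommRing R] [IsDomain R]
    (φ : K[X] →+* R[X]) (hφ : nonZeroDivisors K[X] ≤ (nonZeroDivisors R[X]).comap φ) (q : K[X]) :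
    RatFunc.mapRingHom φ hφ (algebraMap K[X] (RatFunc K) q) =
      algebraMap R[X] (RatFunc R) (φ q) := by
  simpa [RatFunc.coe_mapRingHom_eq_coe_map] using RatFunc.map_apply_div φ hφ q 1

theorem conjRF_algebraMap (q : ℂ[X]) :
    conjRF (algebraMap ℂ[X] (RatFunc ℂ) q) =
      algebraMap ℂ[X] (RatFunc ℂ) (q.map (starRingEnd ℂ)) :=
  ratFunc_mapRingHom_algebraMap _ _ q

theorem conjRF_C (c : ℂ) : conjRF (RatFunc.C c) = RatFunc.C (star c) := by
  simpa using conjRF_algebraMap (Polynomial.C c)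

theorem conjRF_zz : conjRF zz = zz := by
  simpa [zz] using conjRF_algebraMap Polynomial.X

theorem transcendental_inv_zz : Transcendental ℂ zz⁻¹ :=
  IsAlgebraic.inv_iff.not.mpr RatFunc.transcendental_X

/-- Para-conjugation `f ↦ f^*(1/z)` as a ring homomorphism. Substitution is additive and
multiplicative only where no denominator vanishes; at `1/z` this holds by transcendence. -/
def paraConjHom : RatFunc ℂ →+* RatFunc ℂ :=
  (algebraMap (IntermediateField.adjoin ℂ {zz⁻¹}) (RatFunc ℂ)).comp
    ((RatFunc.algEquivOfTranscendental zz⁻¹ transcendental_inv_zz).toRingHom.comp conjRF)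

theorem paraConjHom_apply (f : RatFunc ℂ) : paraConjHom f = subst zz⁻¹ (conjRF f) :=
  RatFunc.algEquivOfTranscendental_apply zz⁻¹ transcendental_inv_zz (conjRF f)

theorem paraConjHom_C (c : ℂ) : paraConjHom (RatFunc.C c) = RatFunc.C (star c) := by
  rw [paraConjHom_apply, conjRF_C, subst, RatFunc.eval_C, RatFunc.algebraMap_eq_C]

theorem paraConjHom_zz : paraConjHom zz = zz⁻¹ := by
  rw [paraConjHom_apply, conjRF_zz]
  exact RatFunc.eval_X _ _

theorem paraConjHom_comp_self : paraConjHom.comp paraConjHom = RingHom.id (RatFunc ℂ) :=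
  ratFunc_ringHom_ext (fun c => by simp [paraConjHom_C])
    (show paraConjHom (paraConjHom zz) = zz by simp [paraConjHom_zz])

/-- The star ring structure on `ℂ(z)` whose star is para-conjugation, so that `Rᴴ` is `R^*(1/z)`
for every matrix `R` over `ℂ(z)`. -/
@[reducible] def paraConjStarRing : StarRing (RatFunc ℂ) where
  star f := subst zz⁻¹ (conjRF f)
  star_involutive f := by
    simp only [← paraConjHom_apply]
    exact RingHom.congr_fun paraConjHom_comp_self f
  star_mul f g := by
    rw [← paraConjHom_apply, ← paraConjHom_apply, ← paraConjHom_apply, map_mul, mul_comm]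
  star_add f g := by
    rw [← paraConjHom_apply, ← paraConjHom_apply, ← paraConjHom_apply, map_add]

section StarRing

variable {K m n : Type*} [CommRing K] [StarRing K] {z : K}

theorem smul_conjTranspose_smul_add_conjTranspose (hz : z ∈ unitary K) (P : Matrix m n K)
    (Q : Matrix n m K) : z • (z • P + Qᴴ)ᴴ = z • Q + Pᴴ := by
  rw [conjTranspose_add, conjTranspose_smul, conjTranspose_conjTranspose, smul_add, smul_smul,
    Unitary.mul_star_self_of_mem hz, one_smul, add_comm]

variable [Fintype n] [DecidableEq n]

theorem conjTranspose_inv_eq_smul_inv {M : Matrix n n K} (hdet : IsUnit M.det)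
    (hM : z • Mᴴ = M) : M⁻¹ᴴ = z • M⁻¹ :=
  calc M⁻¹ᴴ = M⁻¹ᴴ * (z • Mᴴ) * M⁻¹ := by
        rw [hM, Matrix.mul_assoc, mul_nonsing_inv _ hdet, Matrix.mul_one]
    _ = z • ((M * M⁻¹)ᴴ * M⁻¹) := by
        rw [conjTranspose_mul, Matrix.mul_smul, Matrix.smul_mul]
    _ = z • M⁻¹ := by
        rw [mul_nonsing_inv _ hdet, conjTranspose_one, Matrix.one_mul]

theorem smul_conjTranspose_add_mul_inv_mul {M : Matrix n n K} {P : Matrix m m K}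
    {Q : Matrix m n K} {R : Matrix n m K} (hdet : IsUnit M.det) (hM : z • Mᴴ = M)
    (hP : z • Pᴴ = P) (hQ : z • Qᴴ = R) (hR : z • Rᴴ = Q) :
    z • (P + Q * M⁻¹ * R)ᴴ = P + Q * M⁻¹ * R :=
  calc z • (P + Q * M⁻¹ * R)ᴴ = z • Pᴴ + (z • Rᴴ) * (M⁻¹ᴴ * Qᴴ) := by
        rw [conjTranspose_add, conjTranspose_mul, conjTranspose_mul, smul_add, Matrix.smul_mul]
    _ = P + Q * (M⁻¹ * (z • Qᴴ)) := by
        rw [hP, hR, conjTranspose_inv_eq_smul_inv hdet hM, Matrix.smul_mul, Matrix.mul_smul M⁻¹]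
    _ = P + Q * M⁻¹ * R := by rw [hQ, Matrix.mul_assoc]

theorem palindromic_transfer_rev_one_general (hz : z ∈ unitary K) (A : Matrix n n K)
    (B C : Matrix n m K) (D : Matrix m m K) (hdet : IsUnit (z • A + Aᴴ).det) (H : Matrix m m K)
    (hH : H = (z • D + Dᴴ) + (z • Bᴴ + Cᴴ) * (z • A + Aᴴ)⁻¹ * (z • C + B)) : z • Hᴴ = H := by
  have hB : z • (z • Bᴴ + Cᴴ)ᴴ = z • C + B := by
    simpa only [conjTranspose_conjTranspose] using
      smul_conjTranspose_smul_add_conjTranspose hz Bᴴ C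
  have hC : z • (z • C + B)ᴴ = z • Bᴴ + Cᴴ := by
    simpa only [conjTranspose_conjTranspose] using
      smul_conjTranspose_smul_add_conjTranspose hz C Bᴴ
  rw [hH]
  exact smul_conjTranspose_add_mul_inv_mul hdet
    (smul_conjTranspose_smul_add_conjTranspose hz A A)
    (smul_conjTranspose_smul_add_conjTranspose hz D D) hB hC

end StarRing

attribute [local instance] paraConjStarRing

theorem zz_mem_unitary : zz ∈ unitary (RatFunc ℂ) := by
  have hstar : star zz = zz⁻¹ := (paraConjHom_apply zz).symm.trans paraConjHom_zz
  have hzz : zz ≠ 0 := RatFunc.X_ne_zero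
  rw [Unitary.mem_iff, hstar]
  exact ⟨inv_mul_cancel₀ hzz, mul_inv_cancel₀ hzz⟩

theorem toRF_conjTranspose {n o : Type*} (A : Matrix n o ℂ) : toRF Aᴴ = (toRF A)ᴴ :=
  conjTranspose_map _ fun c => ((paraConjHom_apply _).symm.trans (paraConjHom_C c)).symm

/-- the transfer function `H` of a `*`-palindromic linear system matrix
satisfies `z · H^*(1/z) = H`. -/
theorem palindromic_transfer_rev_one (p m : ℕ)
    (A : Matrix (Fin p) (Fin p) ℂ) (B C : Matrix (Fin p) (Fin m) ℂ)
    (D : Matrix (Fin m) (Fin m) ℂ)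
    (hdet : (zz • toRF A + toRF Aᴴ).det ≠ 0)
    (H : Matrix (Fin m) (Fin m) (RatFunc ℂ))
    (hH : H = (zz • toRF D + toRF Dᴴ) +
      (zz • toRF Bᴴ + toRF Cᴴ) * (zz • toRF A + toRF Aᴴ)⁻¹ *
      (zz • toRF C + toRF B)) :
    ∀ i j, zz * subst zz⁻¹ (conjRF (H j i)) = H i j := by
  simp only [toRF_conjTranspose] at hdet hH
  exact congrFun₂ (palindromic_transfer_rev_one_general zz_mem_unitary _ _ _ _ hdet.isUnit H hH)
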